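/- Let ψ ∈ C^∞(ℝ^N; ℝ) have all its partial derivatives of every order ≥ 1 bounded on ℝ^N. Write z = (z', z_N) ∈ ℝ^{N−1} × ℝ and, for parameters τ ≥ 1, γ ≥ 1, ε ∈ [0,1], set τ̃(z) := τ γ exp(γ ψ(ε z', z_N)). Then for every multi-index α = (α', α_N) ∈ ℕ^{N−1} × ℕ there exists C_α > 0, independent of τ, γ and ε, such that |∂_z^α τ̃(z)| ≤ C_α γ^{α_N} (1 + εγ)^{|α'|} τ̃(z) for all z ∈ ℝ^N, τ ≥ 1, γ ≥ 1, ε ∈ [0,1]. (This expresses that τ̃ = τγφ_{γ,ε} is a symbol of order (0;1) for the three-parameter Weyl–Hörmander metrics g and g_T of the paper.) -/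

import Mathlib

/-- Directional derivative of a real-valued function on `ℝ^{N−1} × ℝ`. -/
noncomputable def pdv {n : ℕ} (v : (Fin n → ℝ) × ℝ) (f : ((Fin n → ℝ) × ℝ) → ℝ) :
    ((Fin n → ℝ) × ℝ) → ℝ :=
  fun z => fderiv ℝ f z v

/-- Iterated multi-index partial derivative `∂_z^α = ∂_{z'}^{α'} ∂_{z_N}^{α_N}`. -/
noncomputable def mdv {n : ℕ} (α' : Fin n → ℕ) (αN : ℕ) (f : ((Fin n → ℝ) × ℝ) → ℝ) :
    ((Fin n → ℝ) × ℝ) → ℝ :=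
  (pdv ((0 : Fin n → ℝ), (1 : ℝ)))^[αN]
    ((List.finRange n).foldr (fun j g => (pdv (Pi.single j 1, (0 : ℝ)))^[α' j] g) f)


/-- Uniformly bounded families of smooth functions with weight `w`. -/
def Sym17 {P E : Type*} [NormedAddCommGroup E] [NormedSpace ℝ E] (w : P → ℝ) (a : P → E → ℝ) :
    Prop :=
  (∀ p, ContDiff ℝ (⊤ : ℕ∞) (a p)) ∧
    ∀ k : ℕ, ∃ M : ℝ, 0 ≤ M ∧ ∀ p z, ‖iteratedFDeriv ℝ k (a p) z‖ ≤ M * w p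

section
variable {P E : Type*} [NormedAddCommGroup E] [NormedSpace ℝ E]

theorem Sym17.mono {w w' : P → ℝ} {a : P → E → ℝ} (h : Sym17 w a) (hw : ∀ p, w p ≤ w' p) :
    Sym17 w' a := by
  refine ⟨h.1, fun k => ?_⟩
  obtain ⟨M, hM, h2⟩ := h.2 k
  exact ⟨M, hM, fun p z => (h2 p z).trans (mul_le_mul_of_nonneg_left (hw p) hM)⟩

theorem Sym17.add {w : P → ℝ} {a b : P → E → ℝ} (ha : Sym17 w a) (hb : Sym17 w b) :
    Sym17 w (fun p z => a p z + b p z) := by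
  refine ⟨fun p => (ha.1 p).add (hb.1 p), fun k => ?_⟩
  obtain ⟨M, hM, h2⟩ := ha.2 k
  obtain ⟨M', hM', h2'⟩ := hb.2 k
  refine ⟨M + M', by positivity, fun p z => ?_⟩
  have e : iteratedFDeriv ℝ k (fun z => a p z + b p z) z
      = iteratedFDeriv ℝ k (a p) z + iteratedFDeriv ℝ k (b p) z :=
    iteratedFDeriv_add_apply ((ha.1 p).of_le (by exact_mod_cast le_top)).contDiffAt
      ((hb.1 p).of_le (by exact_mod_cast le_top)).contDiffAt
  rw [e]
  have := norm_add_le (iteratedFDeriv ℝ k (a p) z) (iteratedFDeriv ℝ k (b p) z)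
  linarith [h2 p z, h2' p z]

theorem Sym17.mul {w w' : P → ℝ} {a b : P → E → ℝ} (ha : Sym17 w a) (hb : Sym17 w' b) :
    Sym17 (fun p => w p * w' p) (fun p z => a p z * b p z) := by
  refine ⟨fun p => (ha.1 p).mul (hb.1 p), fun k => ?_⟩
  choose M hM h2 using ha.2
  choose M' hM' h2' using hb.2
  refine ⟨∑ i ∈ Finset.range (k + 1), (k.choose i : ℝ) * M i * M' (k - i),
    Finset.sum_nonneg fun i _ => by have := hM i; have := hM' (k - i); positivity, fun p z => ?_⟩
  refine (norm_iteratedFDeriv_mul_le (n := k) (N := ((⊤ : ℕ∞) : WithTop ℕ∞)) (ha.1 p) (hb.1 p) z (by exact_mod_cast le_top)).trans ?_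
  rw [Finset.sum_mul]
  refine Finset.sum_le_sum fun i _ => ?_
  calc (k.choose i : ℝ) * ‖iteratedFDeriv ℝ i (a p) z‖ * ‖iteratedFDeriv ℝ (k - i) (b p) z‖
      = (k.choose i : ℝ) * (‖iteratedFDeriv ℝ i (a p) z‖ * ‖iteratedFDeriv ℝ (k - i) (b p) z‖) := by
        ring
    _ ≤ (k.choose i : ℝ) * ((M i * w p) * (M' (k - i) * w' p)) := by
        refine mul_le_mul_of_nonneg_left ?_ (by positivity)
        exact mul_le_mul (h2 i p z) (h2' _ p z) (norm_nonneg _) ((norm_nonneg _).trans (h2 i p z))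
    _ = _ := by ring

theorem Sym17.const (c : P → ℝ) (hc : ∀ p, 0 ≤ c p) : Sym17 c (fun p (_ : E) => c p) := by
  refine ⟨fun p => contDiff_const, fun k => ⟨1, zero_le_one, fun p z => ?_⟩⟩
  rcases Nat.eq_zero_or_pos k with rfl | hk
  · simp [abs_of_nonneg (hc p)]
  · rw [iteratedFDeriv_const_of_ne hk.ne']
    simpa using hc p

theorem norm_iteratedFDeriv_dir17 {f : E → ℝ} (hf : ContDiff ℝ (⊤ : ℕ∞) f) (v : E) (k : ℕ) (z : E) :
    ‖iteratedFDeriv ℝ k (fun z => fderiv ℝ f z v) z‖ ≤ ‖v‖ * ‖iteratedFDeriv ℝ (k + 1) f z‖ := by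
  have hf' : ContDiff ℝ (⊤ : ℕ∞) (fderiv ℝ f) := hf.fderiv_right (by simp)
  have h := norm_iteratedFDeriv_clm_apply_const (c := v) (n := k) (x := z)
    (N := ((⊤ : ℕ∞) : WithTop ℕ∞)) hf'.contDiffAt (by exact_mod_cast le_top)
  rwa [norm_iteratedFDeriv_fderiv] at h

theorem contDiff_dir17 {f : E → ℝ} (hf : ContDiff ℝ (⊤ : ℕ∞) f) (v : E) :
    ContDiff ℝ (⊤ : ℕ∞) (fun z => fderiv ℝ f z v) :=
  (hf.fderiv_right (m := ((⊤ : ℕ∞) : WithTop ℕ∞)) (by simp)).clm_apply contDiff_const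

theorem Sym17.dir {w : P → ℝ} {a : P → E → ℝ} (ha : Sym17 w a) (v : E) :
    Sym17 w (fun p z => fderiv ℝ (a p) z v) := by
  refine ⟨fun p => contDiff_dir17 (ha.1 p) v, fun k => ?_⟩
  obtain ⟨M, hM, h2⟩ := ha.2 (k + 1)
  refine ⟨‖v‖ * M, by positivity, fun p z => ?_⟩
  refine (norm_iteratedFDeriv_dir17 (ha.1 p) v k z).trans ?_
  rw [mul_assoc]
  exact mul_le_mul_of_nonneg_left (h2 p z) (norm_nonneg _)

theorem Sym17.comp {b : E → ℝ} (hb : ContDiff ℝ (⊤ : ℕ∞) b)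
    (hbd : ∀ k : ℕ, ∃ M : ℝ, ∀ z, ‖iteratedFDeriv ℝ k b z‖ ≤ M)
    (L : P → E →L[ℝ] E) (hL : ∀ p, ‖L p‖ ≤ 1) :
    Sym17 (fun _ => 1) (fun p z => b (L p z)) := by
  refine ⟨fun p => hb.comp (L p).contDiff, fun k => ?_⟩
  obtain ⟨M, hM⟩ := hbd k
  refine ⟨M, (norm_nonneg _).trans (hM 0), fun p z => ?_⟩
  have e := (L p).iteratedFDeriv_comp_right (n := ((⊤ : ℕ∞) : WithTop ℕ∞)) hb z (i := k) (by exact_mod_cast le_top)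
  change ‖iteratedFDeriv ℝ k (b ∘ L p) z‖ ≤ _
  rw [e]
  refine (ContinuousMultilinearMap.norm_compContinuousLinearMap_le _ _).trans ?_
  rw [mul_one]
  refine le_trans (mul_le_of_le_one_right (norm_nonneg _) ?_) (hM _)
  exact Finset.prod_le_one (fun _ _ => norm_nonneg _) (fun _ _ => hL p)

/-- `f` is `F` times a bounded family of weight `w`. -/
def Good17 (F : P → E → ℝ) (w : P → ℝ) (f : P → E → ℝ) : Prop :=
  ∃ a : P → E → ℝ, Sym17 w a ∧ ∀ p, f p = fun z => a p z * F p z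

theorem Good17.step {ψ : E → ℝ} (hψ : ContDiff ℝ (⊤ : ℕ∞) ψ)
    (hbdd : ∀ k : ℕ, 1 ≤ k → ∃ M : ℝ, ∀ z, ‖iteratedFDeriv ℝ k ψ z‖ ≤ M)
    (L : P → E →L[ℝ] E) (hL : ∀ p, ‖L p‖ ≤ 1) (κ γ : P → ℝ)
    (v : E) (c m : P → ℝ) (hv : ∀ p, L p v = c p • v) (hc : ∀ p, 0 ≤ γ p * c p)
    (hm : ∀ p, 1 ≤ m p) (hcm : ∀ p, γ p * c p ≤ m p)
    {w : P → ℝ} (hw : ∀ p, 0 ≤ w p) {f : P → E → ℝ}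
    (hf : Good17 (fun p z => κ p * Real.exp (γ p * ψ (L p z))) w f) :
    Good17 (fun p z => κ p * Real.exp (γ p * ψ (L p z))) (fun p => w p * m p)
      (fun p z => fderiv ℝ (f p) z v) := by
  obtain ⟨a, ha, hfa⟩ := hf
  have hb : Sym17 (fun _ : P => (1:ℝ)) (fun p z => (fun y => fderiv ℝ ψ y v) (L p z)) := by
    refine Sym17.comp (contDiff_dir17 hψ v) (fun k => ?_) L hL
    obtain ⟨M, hM⟩ := hbdd (k + 1) (by omega)
    exact ⟨‖v‖ * M, fun z => (norm_iteratedFDeriv_dir17 hψ v k z).trans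
      (mul_le_mul_of_nonneg_left (hM z) (norm_nonneg _))⟩
  have h1 := (ha.dir v).mono (w' := fun p => w p * m p)
    (fun p => le_mul_of_one_le_right (hw p) (hm p))
  have h2 := (ha.mul ((Sym17.const (E := E) (fun p => γ p * c p) hc).mul hb)).mono
    (w' := fun p => w p * m p)
    (fun p => by simpa using mul_le_mul_of_nonneg_left (hcm p) (hw p))
  refine ⟨_, h1.add h2, fun p => funext fun z => ?_⟩
  beta_reduce
  rw [hfa p]
  have hψ1 : HasFDerivAt ψ (fderiv ℝ ψ (L p z)) (L p z) :=
    ((hψ.differentiable (by simp)) _).hasFDerivAt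
  have hL1 := hψ1.comp z (L p).hasFDerivAt
  have hF := ((hL1.const_mul (γ p)).exp).const_mul (κ p)
  have ha1 : HasFDerivAt (a p) (fderiv ℝ (a p) z) z :=
    (((ha.1 p).differentiable (by simp)) _).hasFDerivAt
  have := (ha1.mul hF).fderiv
  change (fderiv ℝ (a p * fun z => κ p * Real.exp (γ p * ψ (L p z))) z) v = _
  simp only [Function.comp_def] at this
  rw [this]
  simp [hv]
  ring

theorem Good17.iter {F : P → E → ℝ} (D : (E → ℝ) → E → ℝ) (m : P → ℝ) (hm : ∀ p, 1 ≤ m p)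
    (hstep : ∀ (w : P → ℝ) (f : P → E → ℝ), (∀ p, 0 ≤ w p) → Good17 F w f →
      Good17 F (fun p => w p * m p) (fun p => D (f p)))
    (k : ℕ) {w : P → ℝ} {f : P → E → ℝ} (hw : ∀ p, 0 ≤ w p) (hf : Good17 F w f) :
    Good17 F (fun p => w p * m p ^ k) (fun p => D^[k] (f p)) := by
  induction k with
  | zero => simpa using hf
  | succ k ih =>
    have := hstep _ _ (fun p => mul_nonneg (hw p) (pow_nonneg (zero_le_one.trans (hm p)) k)) ih
    simp only [Function.iterate_succ_apply', pow_succ, ← mul_assoc]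
    exact this

theorem Good17.fold {F : P → E → ℝ} {ι : Type*} (D : ι → (E → ℝ) → E → ℝ) (α : ι → ℕ)
    (m : P → ℝ) (hm : ∀ p, 1 ≤ m p)
    (hstep : ∀ (i : ι) (w : P → ℝ) (f : P → E → ℝ), (∀ p, 0 ≤ w p) → Good17 F w f →
      Good17 F (fun p => w p * m p) (fun p => D i (f p)))
    (l : List ι) {f : P → E → ℝ} (hf : Good17 F (fun _ => 1) f) :
    Good17 F (fun p => m p ^ (l.map α).sum)
      (fun p => l.foldr (fun j g => (D j)^[α j] g) (f p)) := by
  induction l with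
  | nil => simpa using hf
  | cons i l ih =>
    have := Good17.iter (D i) m hm (hstep i) (α i)
      (fun p => pow_nonneg (zero_le_one.trans (hm p)) _) ih
    simp only [List.foldr_cons, List.map_cons, List.sum_cons, pow_add]
    simp only [mul_comm (m _ ^ α i)]
    exact this
end

/-- `(z', z_N) ↦ (ε z', z_N)`. -/
noncomputable def scale17 (n : ℕ) (ε : ℝ) : ((Fin n → ℝ) × ℝ) →L[ℝ] ((Fin n → ℝ) × ℝ) :=
  (ε • ContinuousLinearMap.fst ℝ (Fin n → ℝ) ℝ).prod (ContinuousLinearMap.snd ℝ (Fin n → ℝ) ℝ)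

theorem scale17_apply (n : ℕ) (ε : ℝ) (w : (Fin n → ℝ) × ℝ) :
    scale17 n ε w = (fun j => ε * w.1 j, w.2) := rfl

theorem scale17_norm (n : ℕ) (ε : ℝ) (h0 : 0 ≤ ε) (h1 : ε ≤ 1) : ‖scale17 n ε‖ ≤ 1 := by
  refine ContinuousLinearMap.opNorm_le_bound _ zero_le_one fun w => ?_
  rw [one_mul]
  change ‖(ε • w.1, w.2)‖ ≤ ‖w‖
  rw [Prod.norm_def, Prod.norm_def, norm_smul, Real.norm_of_nonneg h0]
  exact max_le_max (mul_le_of_le_one_left (norm_nonneg _) h1) le_rfl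

/-- `τ̃ = τγ exp(γψ(εz', z_N))` is a symbol of order `(0;1)`: for every multi-index
`α = (α', α_N)` there is `C_α > 0`, independent of the parameters, with
`|∂_z^α τ̃| ≤ C_α γ^{α_N} (1+εγ)^{|α'|} τ̃`. -/
theorem stmt17 (n : ℕ)
    (ψ : ((Fin n → ℝ) × ℝ) → ℝ) (hψ : ContDiff ℝ (⊤ : ℕ∞) ψ)
    (hbdd : ∀ k : ℕ, 1 ≤ k → ∃ M : ℝ, ∀ z, ‖iteratedFDeriv ℝ k ψ z‖ ≤ M) :
    ∀ (α' : Fin n → ℕ) (αN : ℕ), ∃ C > 0,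
      ∀ (τ γ ε : ℝ), 1 ≤ τ → 1 ≤ γ → 0 ≤ ε → ε ≤ 1 →
      ∀ z : (Fin n → ℝ) × ℝ,
        |mdv α' αN (fun w => τ * γ * Real.exp (γ * ψ (fun j => ε * w.1 j, w.2))) z| ≤
          C * γ ^ αN * (1 + ε * γ) ^ (∑ j, α' j) *
            (τ * γ * Real.exp (γ * ψ (fun j => ε * z.1 j, z.2))) := by
  intro α' αN
  let P := {p : ℝ × ℝ × ℝ // 1 ≤ p.1 ∧ 1 ≤ p.2.1 ∧ 0 ≤ p.2.2 ∧ p.2.2 ≤ 1}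
  let γ : P → ℝ := fun p => p.1.2.1
  let ε : P → ℝ := fun p => p.1.2.2
  let κ : P → ℝ := fun p => p.1.1 * p.1.2.1
  have hγ : ∀ p, 1 ≤ γ p := fun p => p.2.2.1
  have hε : ∀ p, 0 ≤ ε p := fun p => p.2.2.2.1
  have hεγ : ∀ p, 0 ≤ ε p * γ p := fun p => mul_nonneg (hε p) (zero_le_one.trans (hγ p))
  let L : P → _ := fun p => scale17 n (ε p)
  have hL : ∀ p, ‖L p‖ ≤ 1 := fun p => scale17_norm n _ p.2.2.2.1 p.2.2.2.2
  let F : P → ((Fin n → ℝ) × ℝ) → ℝ := fun p z => κ p * Real.exp (γ p * ψ (L p z))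
  have h0 : Good17 F (fun _ => 1) F :=
    ⟨fun _ _ => 1, Sym17.const (fun _ => 1) (fun _ => zero_le_one), fun p => by simp⟩
  have hm1 : ∀ p, 1 ≤ 1 + ε p * γ p := fun p => by linarith [hεγ p]
  have h1 := Good17.fold (F := F) (fun j : Fin n => pdv (Pi.single j 1, (0 : ℝ))) α'
    (fun p => 1 + ε p * γ p) hm1
    (fun j w f hw hf => Good17.step hψ hbdd L hL κ γ (Pi.single j 1, (0:ℝ)) ε _
      (fun p => by
        ext i
        · simp [L, scale17_apply]
        · simp [L, scale17_apply])
      (fun p => by linarith [hεγ p]) hm1 (fun p => by linarith [hεγ p]) hw hf)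
    (List.finRange n) h0
  have h2 := Good17.iter (F := F) (pdv ((0 : Fin n → ℝ), (1 : ℝ))) γ hγ
    (fun w f hw hf => Good17.step hψ hbdd L hL κ γ ((0 : Fin n → ℝ), (1 : ℝ)) (fun _ => 1) _
      (fun p => by
        ext i
        · simp [L, scale17_apply]
        · simp [L, scale17_apply])
      (fun p => by linarith [hγ p]) hγ (fun p => by simp) hw hf) αN
      (fun p => pow_nonneg (zero_le_one.trans (hm1 p)) _) h1
  obtain ⟨a, ha, hfa⟩ := h2
  obtain ⟨M, hM, hb⟩ := ha.2 0
  refine ⟨M + 1, by linarith, fun τ' γ' ε' h1 h2 h3 h4 z => ?_⟩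
  let p : P := ⟨(τ', γ', ε'), h1, h2, h3, h4⟩
  have hz := congrFun (hfa p) z
  have hbz := hb p z
  rw [norm_iteratedFDeriv_zero, Real.norm_eq_abs, ← Fin.sum_univ_def] at hbz
  change mdv α' αN (fun w => τ' * γ' * Real.exp (γ' * ψ (fun j => ε' * w.1 j, w.2))) z =
    a p z * (τ' * γ' * Real.exp (γ' * ψ (fun j => ε' * z.1 j, z.2))) at hz
  change |a p z| ≤ M * ((1 + ε' * γ') ^ (∑ j, α' j) * γ' ^ αN) at hbz
  have hF : 0 ≤ τ' * γ' * Real.exp (γ' * ψ (fun j => ε' * z.1 j, z.2)) := by positivity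
  rw [hz, abs_mul, abs_of_nonneg hF]
  refine mul_le_mul_of_nonneg_right (hbz.trans ?_) hF
  have : 0 ≤ (1 + ε' * γ') ^ (∑ j, α' j) * γ' ^ αN := by positivity
  nlinarith
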